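/- Fix a central charge Z : ℤ² → ℂ with φ(1,0) < φ(0,1). A nonzero representation of the barbell quiver with potential is stable if and only if it is isomorphic to the simple representation S₁ = (ℂ, 0, 0, 0, 0) at vertex 1 or to the simple representation S₂ = (0, ℂ, 0, 0, 0) at vertex 2. -/

import Mathlib

/-!
# Statement 12

Work over `ℂ`.  The barbell quiver has vertices `1` and `2`, a loop `a` at vertex `1`, a loop
`b` at vertex `2`, and an arrow `c : 1 → 2`; its potential is `W = a³ + b³`, whose Jacobian
relations are `a² = 0` and `b² = 0`.  Fix a central charge `Z : ℤ² → ℂ` with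
`φ(1,0) < φ(0,1)`.  A nonzero representation of the barbell quiver with potential is stable
if and only if it is isomorphic to the simple representation `S₁ = (ℂ, 0, 0, 0, 0)` at vertex
`1` or to the simple representation `S₂ = (0, ℂ, 0, 0, 0)` at vertex `2`.
-/

noncomputable section
open Module

/-- The set `ℍ = {r·exp(iπφ) : r > 0, 0 < φ ≤ 1} ⊆ ℂ`. -/
def UpperH : Set ℂ :=
  {z | ∃ r φ : ℝ, 0 < r ∧ 0 < φ ∧ φ ≤ 1 ∧ z = (r : ℂ) * Complex.exp ((Real.pi * φ : ℝ) * Complex.I)}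

/-- The phase `φ ∈ (0, 1]` of a complex number `z ∈ ℍ`: if `z = r·exp(iπφ)` with `r > 0` and
`0 < φ ≤ 1`, then `Complex.arg z = π·φ`, so that `phase z = φ` is the unique `φ ∈ (0,1]` with
`z ∈ ℝ_{>0}·exp(iπφ)`. -/
def phase (z : ℂ) : ℝ := Complex.arg z / Real.pi

/-- A representation of the barbell quiver with potential `W = a³ + b³`: finite-dimensional
`ℂ`-vector spaces `V1, V2` and linear maps `fa : V1 → V1`, `fb : V2 → V2`, `fc : V1 → V2`
satisfying the Jacobian relations `fa ∘ fa = 0` and `fb ∘ fb = 0`. -/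
structure BarbellRep where
  V1 : Type
  V2 : Type
  [acg1 : AddCommGroup V1]
  [acg2 : AddCommGroup V2]
  [mod1 : Module ℂ V1]
  [mod2 : Module ℂ V2]
  [fd1 : FiniteDimensional ℂ V1]
  [fd2 : FiniteDimensional ℂ V2]
  fa : V1 →ₗ[ℂ] V1
  fb : V2 →ₗ[ℂ] V2
  fc : V1 →ₗ[ℂ] V2
  rel_a : fa ∘ₗ fa = 0
  rel_b : fb ∘ₗ fb = 0

attribute [instance] BarbellRep.acg1 BarbellRep.acg2 BarbellRep.mod1 BarbellRep.mod2
  BarbellRep.fd1 BarbellRep.fd2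

namespace BarbellRep

/-- The dimension vector `(dim V1, dim V2)`. -/
def dimVec (M : BarbellRep) : ℕ × ℕ := (finrank ℂ M.V1, finrank ℂ M.V2)

/-- A subrepresentation: a pair of submodules closed under the structure maps. -/
structure Sub (M : BarbellRep) where
  S1 : Submodule ℂ M.V1
  S2 : Submodule ℂ M.V2
  mapsto_a : ∀ x ∈ S1, M.fa x ∈ S1
  mapsto_b : ∀ y ∈ S2, M.fb y ∈ S2
  mapsto_c : ∀ x ∈ S1, M.fc x ∈ S2

/-- The dimension vector of a subrepresentation. -/
def Sub.dimVec {M : BarbellRep} (L : M.Sub) : ℕ × ℕ := (finrank ℂ L.S1, finrank ℂ L.S2)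

/-- The subrepresentation is nonzero. -/
def Sub.Nonzero {M : BarbellRep} (L : M.Sub) : Prop := L.S1 ≠ ⊥ ∨ L.S2 ≠ ⊥

/-- The subrepresentation is proper. -/
def Sub.Proper {M : BarbellRep} (L : M.Sub) : Prop := L.S1 ≠ ⊤ ∨ L.S2 ≠ ⊤

end BarbellRep

/-- The value of the central charge on a dimension vector in `ℕ²`. -/
def chargeOf (Z : ℤ × ℤ →+ ℂ) (d : ℕ × ℕ) : ℂ := Z ((d.1 : ℤ), (d.2 : ℤ))

/-- A nonzero representation `M` is semistable if `φ(dim L) ≤ φ(dim M)` for every nonzero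
proper subrepresentation `L` of `M`. -/
def IsSemistable (Z : ℤ × ℤ →+ ℂ) (M : BarbellRep) : Prop :=
  M.dimVec ≠ (0, 0) ∧
    ∀ L : M.Sub, L.Nonzero → L.Proper →
      phase (chargeOf Z L.dimVec) ≤ phase (chargeOf Z M.dimVec)

/-- Isomorphism of barbell representations. -/
def RepIso (M N : BarbellRep) : Prop :=
  ∃ (e1 : M.V1 ≃ₗ[ℂ] N.V1) (e2 : M.V2 ≃ₗ[ℂ] N.V2),
    (∀ x, e1 (M.fa x) = N.fa (e1 x)) ∧ (∀ y, e2 (M.fb y) = N.fb (e2 y)) ∧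
      (∀ x, e2 (M.fc x) = N.fc (e1 x))

/-- Componentwise direct sum of barbell representations. -/
def dsum (M N : BarbellRep) : BarbellRep where
  V1 := M.V1 × N.V1
  V2 := M.V2 × N.V2
  fa := M.fa.prodMap N.fa
  fb := M.fb.prodMap N.fb
  fc := M.fc.prodMap N.fc
  rel_a := by
    apply LinearMap.ext
    rintro ⟨x, y⟩
    have h1 := LinearMap.congr_fun M.rel_a x
    have h2 := LinearMap.congr_fun N.rel_a y
    simp only [LinearMap.comp_apply, LinearMap.prodMap_apply, LinearMap.zero_apply] at h1 h2 ⊢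
    simp [h1, h2]
  rel_b := by
    apply LinearMap.ext
    rintro ⟨x, y⟩
    have h1 := LinearMap.congr_fun M.rel_b x
    have h2 := LinearMap.congr_fun N.rel_b y
    simp only [LinearMap.comp_apply, LinearMap.prodMap_apply, LinearMap.zero_apply] at h1 h2 ⊢
    simp [h1, h2]

/-- The zero representation. -/
def zeroRep : BarbellRep where
  V1 := Fin 0 → ℂ
  V2 := Fin 0 → ℂ
  fa := 0
  fb := 0
  fc := 0
  rel_a := by simp
  rel_b := by simp


/-- A nonzero representation `M` is stable if `φ(dim L) < φ(dim M)` for every nonzero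
proper subrepresentation `L` of `M`. -/
def IsStable (Z : ℤ × ℤ →+ ℂ) (M : BarbellRep) : Prop :=
  M.dimVec ≠ (0, 0) ∧
    ∀ L : M.Sub, L.Nonzero → L.Proper →
      phase (chargeOf Z L.dimVec) < phase (chargeOf Z M.dimVec)

/-- The simple representation `S₁ = (ℂ, 0, 0, 0, 0)` at vertex `1`. -/
def S1rep : BarbellRep where
  V1 := ℂ
  V2 := Fin 0 → ℂ
  fa := 0
  fb := 0
  fc := 0
  rel_a := by simp
  rel_b := by simp

/-- The simple representation `S₂ = (0, ℂ, 0, 0, 0)` at vertex `2`. -/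
def S2rep : BarbellRep where
  V1 := Fin 0 → ℂ
  V2 := ℂ
  fa := 0
  fb := 0
  fc := 0
  rel_a := by simp
  rel_b := by simp

/-!
Write `z = Z(1,0)` and `w = Z(0,1)`. As `0 < arg z < arg w ≤ π`, no point of the cone spanned by
`z` and `w` has larger phase than `w`. A nilpotent endomorphism of a nonzero space kills some
`v ≠ 0`. Hence, if `V₂ ≠ 0`, a vector of `ker f_b` spans a copy of `S₂` inside `M`, whose phase is
maximal; if `V₂ = 0`, a vector of `ker f_a` spans a copy of `S₁`, whose phase is that of `M`. A
stable `M` must equal this subrepresentation. Conversely, a representation of total dimension one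
has no nonzero proper subrepresentation, and `f_a` and `f_b`, being nilpotent, vanish on it.
-/

theorem exists_ne_zero_apply_eq_zero_of_isNilpotent {R V : Type*} [Ring R] [AddCommGroup V]
    [Module R V] [Nontrivial V] {f : End R V} (hf : IsNilpotent f) : ∃ v ≠ 0, f v = 0 := by
  obtain ⟨n, hn⟩ := hf
  by_contra! hker
  have hinj : Function.Injective f :=
    (injective_iff_map_eq_zero f).2 fun v hv => by_contra fun hv0 => hker v hv0 hv
  obtain ⟨v, hv⟩ := exists_ne (0 : V)
  refine hv (hinj.iterate n ?_)
  rw [← End.pow_apply, ← End.pow_apply, hn, LinearMap.zero_apply, LinearMap.zero_apply]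

theorem eq_zero_of_isNilpotent_of_finrank_le_one {R V : Type*} [CommRing R] [IsDomain R]
    [AddCommGroup V] [Module R V] [Module.Free R V] [Module.Finite R V] {f : End R V}
    (hf : IsNilpotent f) (hV : finrank R V ≤ 1) : f = 0 := by
  have hpow : f ^ finrank R V = 0 := by
    simpa only [hf.charpoly_eq_X_pow_finrank, map_pow, Polynomial.aeval_X]
      using f.aeval_self_charpoly
  simpa only [pow_one] using pow_eq_zero_of_le hV hpow

theorem finrank_submodule_eq_finrank_iff {K V : Type*} [DivisionRing K] [AddCommGroup V]
    [Module K V] [FiniteDimensional K V] {S : Submodule K V} :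
    finrank K S = finrank K V ↔ S = ⊤ :=
  ⟨Submodule.eq_top_of_finrank_eq, fun hS => by rw [hS, finrank_top]⟩

theorem norm_mul_sin_arg_sub (x : ℂ) (θ : ℝ) :
    ‖x‖ * Real.sin (x.arg - θ) = x.im * Real.cos θ - x.re * Real.sin θ := by
  rw [Real.sin_sub, ← Complex.norm_mul_sin_arg x, ← Complex.norm_mul_cos_arg x]
  ring

theorem arg_add_real_mul_lt {z w : ℂ} (hz : 0 < z.arg) (hzw : z.arg < w.arg) (r : ℝ) :
    (z + r * w).arg < w.arg := by
  set u := z + r * w with hu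
  have hw : ‖w‖ * Real.sin (w.arg - w.arg) = 0 := by rw [sub_self, Real.sin_zero, mul_zero]
  -- `‖x‖ * sin (arg x - arg w)` is linear in `x` and vanishes at `w`.
  have hsin : ‖u‖ * Real.sin (u.arg - w.arg) = ‖z‖ * Real.sin (z.arg - w.arg) := by
    rw [norm_mul_sin_arg_sub] at hw ⊢
    rw [norm_mul_sin_arg_sub, hu, Complex.add_im, Complex.add_re, Complex.im_ofReal_mul,
      Complex.re_ofReal_mul]
    linear_combination r * hw
  have hz0 : z ≠ 0 := by
    rintro rfl
    exact hz.ne' Complex.arg_zero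
  have hneg : ‖z‖ * Real.sin (z.arg - w.arg) < 0 :=
    mul_neg_of_pos_of_neg (norm_pos_iff.2 hz0) <|
      Real.sin_neg_of_neg_of_neg_pi_lt (by linarith) (by linarith [Complex.arg_le_pi w])
  by_contra! hle
  have hnonneg : 0 ≤ Real.sin (u.arg - w.arg) :=
    Real.sin_nonneg_of_nonneg_of_le_pi (by linarith) (by linarith [Complex.arg_le_pi u])
  exact hneg.not_ge (hsin ▸ mul_nonneg (norm_nonneg u) hnonneg)

theorem arg_pos_of_mem_upperH {z : ℂ} (hz : z ∈ UpperH) : 0 < z.arg := by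
  obtain ⟨r, φ, hr, hφ, hφ1, rfl⟩ := hz
  have hpos : 0 < Real.pi * φ := mul_pos Real.pi_pos hφ
  have hle : Real.pi * φ ≤ Real.pi := mul_le_of_le_one_right Real.pi_pos.le hφ1
  rwa [Complex.arg_real_mul _ hr, Complex.arg_exp_mul_I,
    (toIocMod_eq_self _).2 ⟨by linarith [Real.pi_pos], by linarith⟩]

theorem phase_lt_phase_iff {z w : ℂ} : phase z < phase w ↔ z.arg < w.arg :=
  div_lt_div_iff_of_pos_right Real.pi_pos

theorem phase_real_mul (z : ℂ) {r : ℝ} (hr : 0 < r) : phase (r * z) = phase z := by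
  rw [phase, phase, Complex.arg_real_mul z hr]

theorem phase_real_mul_add_real_mul_lt {z w : ℂ} (hz : z ∈ UpperH) (hzw : phase z < phase w)
    {r : ℝ} (hr : 0 < r) (s : ℝ) : phase (r * z + s * w) < phase w := by
  have harg := Complex.arg_real_mul z hr
  rw [phase_lt_phase_iff] at hzw ⊢
  exact arg_add_real_mul_lt (harg ▸ arg_pos_of_mem_upperH hz) (harg ▸ hzw) s

theorem chargeOf_eq (Z : ℤ × ℤ →+ ℂ) (d : ℕ × ℕ) :
    chargeOf Z d = (d.1 : ℝ) * Z (1, 0) + (d.2 : ℝ) * Z (0, 1) := by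
  have hd : ((d.1 : ℤ), (d.2 : ℤ)) = d.1 • ((1, 0) : ℤ × ℤ) + d.2 • ((0, 1) : ℤ × ℤ) := by
    ext <;> simp
  rw [chargeOf, hd, map_add, map_nsmul, map_nsmul, nsmul_eq_mul, nsmul_eq_mul,
    Complex.ofReal_natCast, Complex.ofReal_natCast]

theorem phase_chargeOf_fst (Z : ℤ × ℤ →+ ℂ) {m : ℕ} (hm : m ≠ 0) :
    phase (chargeOf Z (m, 0)) = phase (Z (1, 0)) := by
  simpa [chargeOf_eq] using phase_real_mul (Z (1, 0)) (Nat.cast_pos.2 (Nat.pos_of_ne_zero hm))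

theorem phase_chargeOf_snd (Z : ℤ × ℤ →+ ℂ) {n : ℕ} (hn : n ≠ 0) :
    phase (chargeOf Z (0, n)) = phase (Z (0, 1)) := by
  simpa [chargeOf_eq] using phase_real_mul (Z (0, 1)) (Nat.cast_pos.2 (Nat.pos_of_ne_zero hn))

theorem phase_chargeOf_le {Z : ℤ × ℤ →+ ℂ} (hZ : Z (1, 0) ∈ UpperH)
    (hph : phase (Z (1, 0)) < phase (Z (0, 1))) {d : ℕ × ℕ} (hd : d ≠ (0, 0)) :
    phase (chargeOf Z d) ≤ phase (Z (0, 1)) := by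
  obtain ⟨m, n⟩ := d
  rcases Nat.eq_zero_or_pos m with rfl | hm
  · exact (phase_chargeOf_snd Z fun hn => hd (by rw [hn])).le
  · rw [chargeOf_eq]
    exact (phase_real_mul_add_real_mul_lt hZ hph (Nat.cast_pos.2 hm) n).le

namespace BarbellRep

variable {M N : BarbellRep}

theorem isNilpotent_fa (M : BarbellRep) : IsNilpotent M.fa :=
  ⟨2, (pow_two M.fa).trans M.rel_a⟩

theorem isNilpotent_fb (M : BarbellRep) : IsNilpotent M.fb :=
  ⟨2, (pow_two M.fb).trans M.rel_b⟩

theorem Sub.dimVec_le (L : M.Sub) : L.dimVec ≤ M.dimVec :=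
  ⟨L.S1.finrank_le, L.S2.finrank_le⟩

theorem Sub.nonzero_iff_dimVec_ne {L : M.Sub} : L.Nonzero ↔ L.dimVec ≠ (0, 0) := by
  simp only [Nonzero, Sub.dimVec, ne_eq, Prod.mk.injEq, Submodule.finrank_eq_zero, not_and_or]

theorem Sub.proper_iff_dimVec_ne {L : M.Sub} : L.Proper ↔ L.dimVec ≠ M.dimVec := by
  simp only [Proper, Sub.dimVec, BarbellRep.dimVec, ne_eq, Prod.mk.injEq,
    finrank_submodule_eq_finrank_iff, not_and_or]

theorem exists_sub_dimVec_eq_zero_one (h2 : finrank ℂ M.V2 ≠ 0) :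
    ∃ L : M.Sub, L.dimVec = (0, 1) := by
  have : Nontrivial M.V2 := finrank_pos_iff.1 (Nat.pos_of_ne_zero h2)
  obtain ⟨v, hv, hbv⟩ := exists_ne_zero_apply_eq_zero_of_isNilpotent M.isNilpotent_fb
  refine ⟨⟨⊥, Submodule.span ℂ {v}, ?_, ?_, ?_⟩, ?_⟩
  · simp
  · simp [Submodule.mem_span_singleton, hbv]
  · simp
  · rw [Sub.dimVec, finrank_bot, finrank_span_singleton hv]

theorem exists_sub_dimVec_eq_one_zero (h1 : finrank ℂ M.V1 ≠ 0) (hc : M.fc = 0) :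
    ∃ L : M.Sub, L.dimVec = (1, 0) := by
  have : Nontrivial M.V1 := finrank_pos_iff.1 (Nat.pos_of_ne_zero h1)
  obtain ⟨v, hv, hav⟩ := exists_ne_zero_apply_eq_zero_of_isNilpotent M.isNilpotent_fa
  refine ⟨⟨Submodule.span ℂ {v}, ⊥, ?_, ?_, ?_⟩, ?_⟩
  · simp [Submodule.mem_span_singleton, hav]
  · simp
  · simp [hc]
  · rw [Sub.dimVec, finrank_bot, finrank_span_singleton hv]

/-- The total dimension `dim V₁ + dim V₂`; the representations for which it is `1` turn out to be
`S₁` and `S₂`. -/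
def totalDim (M : BarbellRep) : ℕ := M.dimVec.1 + M.dimVec.2

theorem fc_eq_zero_of_totalDim_le_one (hM : M.totalDim ≤ 1) : M.fc = 0 := by
  have hzero : finrank ℂ M.V1 = 0 ∨ finrank ℂ M.V2 = 0 := by
    simp only [totalDim, dimVec] at hM
    lia
  rcases hzero with h1 | h2
  · have := finrank_zero_iff.1 h1
    exact Subsingleton.elim _ _
  · have := finrank_zero_iff.1 h2
    exact Subsingleton.elim _ _

theorem repIso_iff_dimVec_eq_of_totalDim_le_one (hN : N.totalDim ≤ 1) :
    RepIso M N ↔ M.dimVec = N.dimVec := by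
  refine ⟨fun ⟨e1, e2, _⟩ => Prod.ext e1.finrank_eq e2.finrank_eq, fun hMN => ?_⟩
  have maps_eq_zero {P : BarbellRep} (hP : P.totalDim ≤ 1) : P.fa = 0 ∧ P.fb = 0 ∧ P.fc = 0 :=
    ⟨eq_zero_of_isNilpotent_of_finrank_le_one P.isNilpotent_fa (le_of_add_le_left hP),
      eq_zero_of_isNilpotent_of_finrank_le_one P.isNilpotent_fb (le_of_add_le_right hP),
      fc_eq_zero_of_totalDim_le_one hP⟩
  obtain ⟨hNa, hNb, hNc⟩ := maps_eq_zero hN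
  obtain ⟨hMa, hMb, hMc⟩ := maps_eq_zero (P := M) (by rwa [totalDim, hMN])
  refine ⟨LinearEquiv.ofFinrankEq _ _ (congrArg Prod.fst hMN),
    LinearEquiv.ofFinrankEq _ _ (congrArg Prod.snd hMN), ?_, ?_, ?_⟩
  all_goals simp only [hMa, hMb, hMc, hNa, hNb, hNc, LinearMap.zero_apply, map_zero, implies_true]

theorem isStable_of_totalDim_eq_one (Z : ℤ × ℤ →+ ℂ) (hM : M.totalDim = 1) : IsStable Z M := by
  refine ⟨fun h0 => by simp [totalDim, h0] at hM, fun L hL hP => ?_⟩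
  obtain ⟨hle1, hle2⟩ := L.dimVec_le
  rw [Sub.nonzero_iff_dimVec_ne, ne_eq, Prod.ext_iff] at hL
  rw [Sub.proper_iff_dimVec_ne, ne_eq, Prod.ext_iff] at hP
  unfold totalDim at hM
  lia

theorem dimVec_eq_of_isStable_of_phase_le {Z : ℤ × ℤ →+ ℂ} (hM : IsStable Z M) {L : M.Sub}
    (hL : L.Nonzero) (hle : phase (chargeOf Z M.dimVec) ≤ phase (chargeOf Z L.dimVec)) :
    M.dimVec = L.dimVec :=
  by_contra fun hne => (hM.2 L hL (Sub.proper_iff_dimVec_ne.2 (Ne.symm hne))).not_ge hle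

theorem dimVec_eq_of_isStable {Z : ℤ × ℤ →+ ℂ} (hZ : Z (1, 0) ∈ UpperH)
    (hph : phase (Z (1, 0)) < phase (Z (0, 1))) (hM : IsStable Z M) :
    M.dimVec = (1, 0) ∨ M.dimVec = (0, 1) := by
  by_cases h2 : finrank ℂ M.V2 = 0
  · have h1 : finrank ℂ M.V1 ≠ 0 := fun h1 => hM.1 (Prod.ext h1 h2)
    have : Subsingleton M.V2 := finrank_zero_iff.1 h2
    obtain ⟨L, hL⟩ := exists_sub_dimVec_eq_one_zero h1 (Subsingleton.elim M.fc 0)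
    refine .inl (hL ▸ dimVec_eq_of_isStable_of_phase_le hM ?_ ?_)
    · simp [Sub.nonzero_iff_dimVec_ne, hL]
    · rw [hL, dimVec, h2, phase_chargeOf_fst Z h1, phase_chargeOf_fst Z one_ne_zero]
  · obtain ⟨L, hL⟩ := exists_sub_dimVec_eq_zero_one h2
    refine .inr (hL ▸ dimVec_eq_of_isStable_of_phase_le hM ?_ ?_)
    · simp [Sub.nonzero_iff_dimVec_ne, hL]
    · rw [hL, phase_chargeOf_snd Z one_ne_zero]
      exact phase_chargeOf_le hZ hph hM.1

theorem dimVec_S1rep : S1rep.dimVec = (1, 0) :=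
  Prod.ext (finrank_self ℂ) (finrank_fin_fun ℂ)

theorem dimVec_S2rep : S2rep.dimVec = (0, 1) :=
  Prod.ext (finrank_fin_fun ℂ) (finrank_self ℂ)

theorem repIso_S1rep_iff : RepIso M S1rep ↔ M.dimVec = (1, 0) := by
  rw [repIso_iff_dimVec_eq_of_totalDim_le_one (by simp [totalDim, dimVec_S1rep]), dimVec_S1rep]

theorem repIso_S2rep_iff : RepIso M S2rep ↔ M.dimVec = (0, 1) := by
  rw [repIso_iff_dimVec_eq_of_totalDim_le_one (by simp [totalDim, dimVec_S2rep]), dimVec_S2rep]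

end BarbellRep

/-- Fix a central charge `Z : ℤ² → ℂ` (values of the standard basis
vectors in `ℍ`) with `φ(1,0) < φ(0,1)`.  A nonzero representation of the barbell quiver with
potential is stable if and only if it is isomorphic to `S₁` or to `S₂`. -/
theorem barbell_stable_iff_simple
    (Z : ℤ × ℤ →+ ℂ)
    (hZ10 : Z (1, 0) ∈ UpperH) (hZ01 : Z (0, 1) ∈ UpperH)
    (hph : phase (Z (1, 0)) < phase (Z (0, 1))) :
    ∀ M : BarbellRep, M.dimVec ≠ (0, 0) →
      (IsStable Z M ↔ (RepIso M S1rep ∨ RepIso M S2rep)) := by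
  intro M _
  rw [BarbellRep.repIso_S1rep_iff, BarbellRep.repIso_S2rep_iff]
  refine ⟨BarbellRep.dimVec_eq_of_isStable hZ10 hph, ?_⟩
  rintro (hdim | hdim) <;>
    exact BarbellRep.isStable_of_totalDim_eq_one Z (by simp [BarbellRep.totalDim, hdim])
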